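/- arXiv:1504.06748 — 3 statements merged into one kernel-verified Lean document; each statement's English description precedes it below -/
import Mathlib

section
/- Let U = {(a_i, b_i) : i = 0, 1, ..., q-1} be a set of q points of AG(2,q), fix the point R = (a_0, b_0) ∈ U, and define the polynomial f(Y) = ∏_{i=1}^{q-1} ((a_i − a_0)Y − (b_i − b_0)) ∈ GF(q)[Y]. Then for every m ∈ GF(q): (a) the line through R with direction (m) meets U in exactly k_m points if and only if m is a root of f of multiplicity exactly k_m − 1; (b) if (m) is not a direction determined by U, then f(m) = −1; (c) if (∞) is not a direction determined by U, then the coefficient of Y^{q-1} in f equals −1. -/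
open Polynomial

/-- Translating an injective image of `|F|` points so that one of them goes to `0`, the product of
the remaining values is `-1` (Wilson's theorem for finite fields). -/
theorem prod_erase_sub_eq_neg_one {F α : Type*} [Field F] [Fintype F] [DecidableEq α]
    {U : Finset α} (hU : U.card = Fintype.card F) {R : α} (hR : R ∈ U) {g : α → F}
    (hg : Set.InjOn g U) : ∏ P ∈ U.erase R, (g P - g R) = -1 := by
  classical
  have hinj : Set.InjOn (fun P => g P - g R) (U.erase R) := fun P hP Q hQ h =>
    hg (Finset.mem_of_mem_erase hP) (Finset.mem_of_mem_erase hQ) (sub_left_injective h)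
  have himage : (U.erase R).image (fun P => g P - g R) = Finset.univ.erase (0 : F) := by
    apply Finset.eq_of_subset_of_card_le
    · intro x hx
      obtain ⟨P, hP, rfl⟩ := Finset.mem_image.mp hx
      obtain ⟨hne, hPU⟩ := Finset.mem_erase.mp hP
      simpa [sub_eq_zero] using fun h => hne (hg hPU hR h)
    · rw [Finset.card_image_of_injOn hinj, Finset.card_erase_of_mem hR,
        Finset.card_erase_of_mem (Finset.mem_univ _), hU, Finset.card_univ]
  have hunits : ∏ x ∈ Finset.univ.erase (0 : F), x = ∏ x : Fˣ, (x : F) := by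
    symm
    refine Finset.prod_bij (fun x _ => (x : F)) (by simp) (fun x _ y _ h => Units.ext h) ?_
      (fun _ _ => rfl)
    intro x hx
    exact ⟨Units.mk0 x (Finset.ne_of_mem_erase hx), Finset.mem_univ _, rfl⟩
  rw [← Finset.prod_image (f := fun x : F => x) hinj, himage, hunits, ← Units.coe_prod,
    FiniteField.prod_univ_units_id_eq_neg_one, Units.val_neg, Units.val_one]

theorem C_mul_X_sub_C_ne_zero {F : Type*} [Field F] {a b : F} (h : ¬(a = 0 ∧ b = 0)) :
    C a * X - C b ≠ 0 := by
  intro h0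
  have h1 : (C a * X - C b).coeff 1 = 0 := by rw [h0, coeff_zero]
  have h2 : (C a * X - C b).coeff 0 = 0 := by rw [h0, coeff_zero]
  exact h ⟨by simpa [coeff_C] using h1, by simpa using h2⟩

theorem rootMultiplicity_C_mul_X_sub_C {F : Type*} [Field F] [DecidableEq F] {a b : F}
    (h : ¬(a = 0 ∧ b = 0)) (m : F) :
    rootMultiplicity m (C a * X - C b) = if b = m * a then 1 else 0 := by
  split_ifs with hb
  · have ha : a ≠ 0 := by
      rintro rfl
      exact h ⟨rfl, by simpa using hb⟩
    have hfac : C a * X - C b = C a * (X - C m) := by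
      rw [hb, C_mul]
      ring
    have hne : C a * (X - C m) ≠ 0 := mul_ne_zero (C_ne_zero.mpr ha) (X_sub_C_ne_zero m)
    rw [hfac, rootMultiplicity_mul hne, rootMultiplicity_C, rootMultiplicity_X_sub_C_self]
  · apply rootMultiplicity_eq_zero
    intro hroot
    apply hb
    simp only [IsRoot.def, eval_sub, eval_mul, eval_C, eval_X, sub_eq_zero] at hroot
    rw [← hroot, mul_comm]

/-- Let `U` be a set of `q` points of `AG(2,q)` (points are pairs in `F × F` where `F = GF(q)`),
fix a point `R = (a₀, b₀) ∈ U`, and let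
`f(Y) = ∏_{P ∈ U, P ≠ R} ((P.1 − a₀)·Y − (P.2 − b₀)) ∈ GF(q)[Y]`.
Then for every `m ∈ GF(q)`:
(a) the line through `R` with direction `(m)` meets `U` in exactly
    `rootMultiplicity m f + 1` points (i.e. it meets `U` in `k` points iff `m` is a root of `f`
    of multiplicity exactly `k − 1`);
(b) if the direction `(m)` is not determined by `U`, then `f(m) = −1`;
(c) if the vertical direction `(∞)` is not determined by `U` (i.e. no two distinct points of `U`
    share their first coordinate), then the coefficient of `Y^{q−1}` in `f` is `−1`. -/
theorem stmt_0 {F : Type*} [Field F] [Fintype F] [DecidableEq F] (q : ℕ)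
    (hq : Fintype.card F = q)
    (U : Finset (F × F)) (hU : U.card = q)
    (R : F × F) (hR : R ∈ U)
    (f : F[X])
    (hf : f = ∏ P ∈ U.erase R, (C (P.1 - R.1) * X - C (P.2 - R.2))) :
    (∀ m : F,
      (U.filter (fun P => P.2 - R.2 = m * (P.1 - R.1))).card = rootMultiplicity m f + 1) ∧
    (∀ m : F,
      (¬ ∃ P ∈ U, ∃ Q ∈ U, P ≠ Q ∧ P.2 - Q.2 = m * (P.1 - Q.1)) → f.eval m = -1) ∧
    ((¬ ∃ P ∈ U, ∃ Q ∈ U, P ≠ Q ∧ P.1 = Q.1) → f.coeff (q - 1) = -1) := by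
  have hfactor : ∀ P ∈ U.erase R, ¬(P.1 - R.1 = 0 ∧ P.2 - R.2 = 0) := by
    rintro P hP ⟨h₁, h₂⟩
    exact Finset.ne_of_mem_erase hP (Prod.ext (sub_eq_zero.mp h₁) (sub_eq_zero.mp h₂))
  subst hq hf
  refine ⟨fun m => ?_, fun m hm => ?_, fun hinf => ?_⟩
  · have hprod : ∏ P ∈ U.erase R, (C (P.1 - R.1) * X - C (P.2 - R.2)) ≠ 0 :=
      Finset.prod_ne_zero_iff.mpr fun P hP => C_mul_X_sub_C_ne_zero (hfactor P hP)
    rw [← count_roots, roots_prod _ _ hprod, Multiset.count_bind, Finset.sum_map_val]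
    simp only [count_roots]
    rw [Finset.sum_congr rfl fun P hP => rootMultiplicity_C_mul_X_sub_C (hfactor P hP) m,
      ← Finset.card_filter, Finset.filter_erase, Finset.card_erase_add_one]
    simpa using hR
  · have hinj : Set.InjOn (fun P : F × F => m * P.1 - P.2) U := by
      intro P hP Q hQ h
      by_contra hne
      exact hm ⟨P, hP, Q, hQ, hne, by linear_combination -h⟩
    rw [← prod_erase_sub_eq_neg_one hU hR hinj, eval_prod]
    refine Finset.prod_congr rfl fun P _ => ?_
    simp only [eval_sub, eval_mul, eval_C, eval_X]
    ring
  · have hinj : Set.InjOn (fun P : F × F => P.1) U := by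
      intro P hP Q hQ h
      by_contra hne
      exact hinf ⟨P, hP, Q, hQ, hne, h⟩
    have hdeg : ∀ P ∈ U.erase R, (C (P.1 - R.1) * X - C (P.2 - R.2)).natDegree ≤ 1 :=
      fun P _ => by compute_degree
    have hcoeff := coeff_prod_of_natDegree_le _ _ 1 hdeg
    rw [Finset.card_erase_of_mem hR, hU, mul_one] at hcoeff
    rw [hcoeff, ← prod_erase_sub_eq_neg_one hU hR hinj]
    refine Finset.prod_congr rfl fun P _ => ?_
    simp [coeff_C]
end

section
/- Let B be a blocking set of Rédei type in PG(2,q) with Rédei line ℓ. (1) If there is a point in B∖ℓ which is not contained in any bisecant of B, then B is minimal and |ℓ ∩ B| ≡ 1 (mod p). (2) If R, R' ∈ B∖ℓ are such that neither R nor R' is contained in a bisecant of B, then for every point M ∈ ℓ the lines RM and R'M meet B in the same number of points, i.e. |RM ∩ B| = |R'M ∩ B|. -/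
/-! Common setup: the Desarguesian projective plane `PG(2,q)` over a finite field `F = GF(q)`.
Points are the projective points of `F³`; lines are the 2-dimensional linear subspaces of `F³`,
with incidence given by containment. -/

/-- Points of `PG(2,F)`. -/
abbrev PGPoint (F : Type*) [Field F] := Projectivization F (Fin 3 → F)

/-- Lines of `PG(2,F)`: the 2-dimensional linear subspaces of `F³`. -/
abbrev PGLine (F : Type*) [Field F] := {W : Submodule F (Fin 3 → F) // Module.finrank F W = 2}

/-- Incidence between a point and a line of `PG(2,F)`. -/
def pgMem {F : Type*} [Field F] (P : PGPoint F) (L : PGLine F) : Prop :=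
  P.submodule ≤ L.val

/-- The number of points of the point set `B` lying on the line `L`;
`L` is a *`k`-secant* of `B` if `nsec B L = k`, a *tangent* if `k = 1`,
a *bisecant* if `k = 2` and a *trisecant* if `k = 3`. -/
noncomputable def nsec {F : Type*} [Field F] (B : Set (PGPoint F)) (L : PGLine F) : ℕ :=
  {P ∈ B | pgMem P L}.ncard

/-- A blocking set: a point set meeting every line. -/
def isBlocking {F : Type*} [Field F] (B : Set (PGPoint F)) : Prop :=
  ∀ L : PGLine F, ∃ P ∈ B, pgMem P L

/-- A minimal blocking set: every point is essential. -/
def isMinimalBlocking {F : Type*} [Field F] (B : Set (PGPoint F)) : Prop :=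
  isBlocking B ∧ ∀ P ∈ B, ¬ isBlocking (B \ {P})

/-- `B` is a blocking set of Rédei type with Rédei line `ℓ`: a blocking set of size
`q + N ≤ 2q` such that `ℓ` meets `B` in exactly `N = |B| − q` points. -/
def isRedeiWithLine {F : Type*} [Field F] (q : ℕ) (B : Set (PGPoint F)) (ℓ : PGLine F) : Prop :=
  isBlocking B ∧ B.ncard ≤ 2 * q ∧ nsec B ℓ + q = B.ncard

/-- A semioval: through each of its points there passes exactly one tangent. -/
def isSemioval {F : Type*} [Field F] (S : Set (PGPoint F)) : Prop :=
  ∀ P ∈ S, ∃! t : PGLine F, pgMem P t ∧ nsec S t = 1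

open Polynomial in
/-- The polynomial whose roots are the slopes of the lines joining the point `r` to the other
points of the affine point set `s`, where the point `i` has coordinates `(a i, b i)`. -/
noncomputable def slopePoly {F ι : Type*} [Field F] [DecidableEq ι] (s : Finset ι)
    (a b : ι → F) (r : ι) : F[X] :=
  ∏ i ∈ s.erase r, (C (a i - a r) * X - C (b i - b r))

theorem prod_erase_sub_eq_neg_one_s1 {F ι : Type*} [Field F] [Fintype F] [DecidableEq ι]
    {s : Finset ι} {g : ι → F} (hs : s.card = Fintype.card F) (hg : Set.InjOn g s)
    {r : ι} (hr : r ∈ s) : ∏ i ∈ s.erase r, (g i - g r) = -1 := by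
  classical
  have himg : s.image (fun i => g i - g r) = Finset.univ := by
    rw [← Finset.card_eq_iff_eq_univ, Finset.card_image_of_injOn, hs]
    intro i hi j hj hij
    exact hg hi hj (sub_left_injective hij)
  have himg' : (s.erase r).image (fun i => g i - g r) = Finset.univ.erase 0 := by
    rw [← himg]
    ext x
    simp only [Finset.mem_image, Finset.mem_erase]
    constructor
    · rintro ⟨i, ⟨hir, hi⟩, rfl⟩
      exact ⟨fun h => hir (hg hi hr (sub_eq_zero.mp h)), i, hi, rfl⟩
    · rintro ⟨hx, i, hi, rfl⟩
      exact ⟨i, ⟨fun h => hx (by simp [h]), hi⟩, rfl⟩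
  have hprod : ∏ i ∈ s.erase r, (g i - g r) = ∏ x ∈ Finset.univ.erase (0 : F), x := by
    rw [← himg', Finset.prod_image]
    intro i hi j hj hij
    exact hg (Finset.mem_of_mem_erase hi) (Finset.mem_of_mem_erase hj) (sub_left_injective hij)
  have hunits : ∏ x ∈ Finset.univ.erase (0 : F), x = ∏ u : Fˣ, (u : F) := by
    symm
    refine Finset.prod_bij (fun u _ => (u : F)) ?_ ?_ ?_ ?_
    · simp
    · intro u _ v _ h
      exact Units.ext h
    · intro x hx
      exact ⟨Units.mk0 x (Finset.ne_of_mem_erase hx), by simp, rfl⟩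
    · simp
  rw [hprod, hunits, ← Units.coe_prod, FiniteField.prod_univ_units_id_eq_neg_one]
  simp

section SlopePoly

variable {F ι : Type*} [Field F] [DecidableEq ι] {s : Finset ι} {a b : ι → F} {r : ι}

theorem slopePoly_eval_eq_zero {y : F}
    (hy : ∃ i ∈ s, i ≠ r ∧ a i * y - b i = a r * y - b r) : (slopePoly s a b r).eval y = 0 := by
  obtain ⟨i, hi, hir, h⟩ := hy
  rw [slopePoly, Polynomial.eval_prod]
  refine Finset.prod_eq_zero (Finset.mem_erase.mpr ⟨hir, hi⟩) ?_
  simp only [Polynomial.eval_sub, Polynomial.eval_mul, Polynomial.eval_C, Polynomial.eval_X]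
  linear_combination h

theorem count_roots_slopePoly [DecidableEq F] (ha : Set.InjOn a s) (hr : r ∈ s) (y : F) :
    (slopePoly s a b r).roots.count y + 1 =
      (s.filter fun i => a i * y - b i = a r * y - b r).card := by
  have hne : ∀ i ∈ s.erase r, a i - a r ≠ 0 := fun i hi h =>
    Finset.ne_of_mem_erase hi (ha (Finset.mem_of_mem_erase hi) hr (sub_eq_zero.mp h))
  have hfac : ∀ i ∈ s.erase r, (Polynomial.C (a i - a r) * Polynomial.X -
      Polynomial.C (b i - b r)) ≠ 0 := fun i hi h => hne i hi <| by
    simpa using congrArg (fun f => Polynomial.coeff f 1) h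
  have hins : (s.filter fun i => a i * y - b i = a r * y - b r) =
      insert r ((s.erase r).filter fun i => a i * y - b i = a r * y - b r) := by
    ext i
    by_cases hir : i = r
    · simp [hir, hr]
    · simp [hir]
  rw [hins, Finset.card_insert_of_notMem (by simp), slopePoly,
    Polynomial.roots_prod _ _ (Finset.prod_ne_zero_iff.mpr hfac), Multiset.count_bind,
    Finset.card_filter]
  congr 1
  change ∑ i ∈ s.erase r, _ = _
  refine Finset.sum_congr rfl fun i hi => ?_
  rw [Polynomial.roots_C_mul_X_sub_C _ (hne i hi), Multiset.count_singleton]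
  refine if_congr ?_ rfl rfl
  rw [inv_mul_eq_div, eq_div_iff (hne i hi)]
  constructor <;> intro h <;> linear_combination h

variable [Fintype F]

theorem slopePoly_eval_of_injOn (hs : s.card = Fintype.card F) (hr : r ∈ s) {y : F}
    (hy : Set.InjOn (fun i => a i * y - b i) s) : (slopePoly s a b r).eval y = -1 := by
  rw [← prod_erase_sub_eq_neg_one_s1 hs hy hr, slopePoly, Polynomial.eval_prod]
  refine Finset.prod_congr rfl fun i _ => ?_
  simp only [Polynomial.eval_sub, Polynomial.eval_mul, Polynomial.eval_C, Polynomial.eval_X]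
  ring

theorem slopePoly_natDegree_le (hs : s.card = Fintype.card F) (hr : r ∈ s) :
    (slopePoly s a b r).natDegree ≤ Fintype.card F - 1 := by
  rw [← hs, ← Finset.card_erase_of_mem hr, slopePoly]
  refine (Polynomial.natDegree_prod_le _ _).trans ?_
  rw [Finset.card_eq_sum_ones]
  refine Finset.sum_le_sum fun i _ => ?_
  compute_degree

theorem slopePoly_coeff (hs : s.card = Fintype.card F) (hr : r ∈ s) (ha : Set.InjOn a s) :
    (slopePoly s a b r).coeff (Fintype.card F - 1) = -1 := by
  rw [← prod_erase_sub_eq_neg_one_s1 hs ha hr, ← hs, ← Finset.card_erase_of_mem hr, slopePoly]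
  rw [← mul_one (s.erase r).card, Polynomial.coeff_prod_of_natDegree_le]
  · simp [-map_sub, Polynomial.coeff_C]
  · intro i _
    compute_degree

theorem sum_eval_eq_neg_coeff {f : Polynomial F} (hf : f.natDegree ≤ Fintype.card F - 1) :
    ∑ y : F, f.eval y = -f.coeff (Fintype.card F - 1) := by
  classical
  have hcard : 1 < Fintype.card F := Fintype.one_lt_card
  have htop : ∑ y : F, y ^ (Fintype.card F - 1) = -1 := by
    rw [← Finset.sum_erase_add _ _ (Finset.mem_univ (0 : F)),
      Finset.sum_congr rfl fun y hy =>
        FiniteField.pow_card_sub_one_eq_one y (Finset.ne_of_mem_erase hy)]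
    rw [Finset.sum_const, Finset.card_erase_of_mem (Finset.mem_univ _), Finset.card_univ,
      zero_pow (by omega), nsmul_eq_mul, Nat.cast_sub hcard.le]
    simp
  simp_rw [Polynomial.eval_eq_sum_range' (Nat.lt_succ_of_le hf)]
  rw [Finset.sum_comm, Finset.sum_range_succ, ← Finset.mul_sum, htop, Finset.sum_eq_zero]
  · ring
  · intro i hi
    rw [← Finset.mul_sum, FiniteField.sum_pow_lt_card_sub_one F i (Finset.mem_range.mp hi),
      mul_zero]

/-- If every slope in `D` occurs at `r` and no slope outside `D` is determined by `s`, then the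
number of slopes in `D` is `1` in `F`. -/
theorem card_slopes_cast_eq_one {D : Finset F} (hs : s.card = Fintype.card F)
    (ha : Set.InjOn a s) (hr : r ∈ s)
    (hD : ∀ y ∈ D, ∃ i ∈ s, i ≠ r ∧ a i * y - b i = a r * y - b r)
    (hD' : ∀ y ∉ D, Set.InjOn (fun i => a i * y - b i) s) : (D.card : F) = 1 := by
  classical
  have hsum := sum_eval_eq_neg_coeff (slopePoly_natDegree_le (a := a) (b := b) hs hr)
  have heval : ∀ y : F, (slopePoly s a b r).eval y = (if y ∈ D then 1 else 0) - 1 := by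
    intro y
    split_ifs with hy
    · rw [slopePoly_eval_eq_zero (hD y hy), sub_self]
    · rw [slopePoly_eval_of_injOn hs hr (hD' y hy), zero_sub]
  rw [slopePoly_coeff hs hr ha] at hsum
  simpa [heval, Finset.sum_sub_distrib] using hsum

/-- Two points of `s` at which exactly the slopes in `D` occur have the same slopes with the same
multiplicities. -/
theorem card_filter_slope_eq [DecidableEq F] {D : Finset F} {r' : ι}
    (hs : s.card = Fintype.card F) (ha : Set.InjOn a s) (hr : r ∈ s) (hr' : r' ∈ s)
    (hD : ∀ y ∈ D, ∃ i ∈ s, i ≠ r ∧ a i * y - b i = a r * y - b r)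
    (hDr' : ∀ y ∈ D, ∃ i ∈ s, i ≠ r' ∧ a i * y - b i = a r' * y - b r')
    (hD' : ∀ y ∉ D, Set.InjOn (fun i => a i * y - b i) s) (y : F) :
    (s.filter fun i => a i * y - b i = a r * y - b r).card =
      (s.filter fun i => a i * y - b i = a r' * y - b r').card := by
  have hcard : 1 < Fintype.card F := Fintype.one_lt_card
  have hdeg : ∀ t ∈ s, (slopePoly s a b t).degree < (Finset.univ : Finset F).card := by
    intro t ht
    refine Polynomial.degree_le_natDegree.trans_lt ?_
    have := slopePoly_natDegree_le (a := a) (b := b) hs ht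
    rw [Finset.card_univ]
    exact_mod_cast (show (slopePoly s a b t).natDegree < Fintype.card F by omega)
  have hpoly : slopePoly s a b r = slopePoly s a b r' := by
    refine Polynomial.eq_of_degrees_lt_of_eval_finset_eq Finset.univ (hdeg r hr) (hdeg r' hr') ?_
    intro z _
    by_cases hz : z ∈ D
    · rw [slopePoly_eval_eq_zero (hD z hz), slopePoly_eval_eq_zero (hDr' z hz)]
    · rw [slopePoly_eval_of_injOn hs hr (hD' z hz), slopePoly_eval_of_injOn hs hr' (hD' z hz)]
  rw [← count_roots_slopePoly ha hr, ← count_roots_slopePoly ha hr', hpoly]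

end SlopePoly

section Coordinates

variable {F : Type*} [Field F]

theorem pgMem_iff_rep_mem {P : PGPoint F} {L : PGLine F} : pgMem P L ↔ P.rep ∈ L.val := by
  rw [pgMem, Projectivization.submodule_eq, Submodule.span_singleton_le_iff_mem]

theorem pgLine_eq_of_mem {P Q : PGPoint F} (hPQ : P ≠ Q) {L L' : PGLine F} (hP : pgMem P L)
    (hQ : pgMem Q L) (hP' : pgMem P L') (hQ' : pgMem Q L') : L = L' := by
  rw [pgMem_iff_rep_mem] at hP hQ hP' hQ'
  have hli := Projectivization.linearIndependent_pair_iff_ne.mpr hPQ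
  have hrank : Module.finrank F (Submodule.span F (Set.range ![P.rep, Q.rep])) = 2 := by
    simpa using finrank_span_eq_card hli
  have key : ∀ K : PGLine F, P.rep ∈ K.val → Q.rep ∈ K.val →
      Submodule.span F (Set.range ![P.rep, Q.rep]) = K.val := by
    intro K h1 h2
    refine Submodule.eq_of_le_of_finrank_eq ?_ (hrank.trans K.2.symm)
    rw [Submodule.span_le]
    rintro _ ⟨i, rfl⟩
    fin_cases i
    · exact h1
    · exact h2
  exact Subtype.ext ((key L hP hQ).symm.trans (key L' hP' hQ'))

/-- Every nonzero covector is, in the coordinates `e`, the equation of a line. -/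
theorem exists_line_of_covector (e : (Fin 3 → F) ≃ₗ[F] (Fin 3 → F)) {w : Fin 3 → F} (hw : w ≠ 0) :
    ∃ L : PGLine F, ∀ P, pgMem P L ↔ w ⬝ᵥ e P.rep = 0 := by
  let f : Module.Dual F (Fin 3 → F) := dotProductBilin F F w ∘ₗ e.toLinearMap
  have hf : f ≠ 0 := by
    obtain ⟨i, hi⟩ := Function.ne_iff.mp hw
    intro h
    apply hi
    have := LinearMap.congr_fun h (e.symm (Pi.single i 1))
    simpa [f] using this
  have hrank := Module.Dual.finrank_ker_add_one_of_ne_zero hf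
  rw [Module.finrank_fin_fun] at hrank
  refine ⟨⟨LinearMap.ker f, by omega⟩, fun P => ?_⟩
  rw [pgMem_iff_rep_mem, LinearMap.mem_ker]
  rfl

theorem pgMem_iff_covector (e : (Fin 3 → F) ≃ₗ[F] (Fin 3 → F)) {w : Fin 3 → F} (hw : w ≠ 0)
    {Q R : PGPoint F} (hQR : Q ≠ R) {L : PGLine F} (hQ : pgMem Q L) (hR : pgMem R L)
    (hwQ : w ⬝ᵥ e Q.rep = 0) (hwR : w ⬝ᵥ e R.rep = 0) (P : PGPoint F) :
    pgMem P L ↔ w ⬝ᵥ e P.rep = 0 := by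
  obtain ⟨L', hL'⟩ := exists_line_of_covector e hw
  rw [pgLine_eq_of_mem hQR hQ hR ((hL' Q).mpr hwQ) ((hL' R).mpr hwR), hL']

theorem eq_of_coords_eq_smul (e : (Fin 3 → F) ≃ₗ[F] (Fin 3 → F)) {P Q : PGPoint F} (k : F)
    (h : ∀ i, k * e Q.rep i = e P.rep i) : P = Q := by
  rw [← P.mk_rep, ← Q.mk_rep, Projectivization.mk_eq_mk_iff']
  refine ⟨k, e.injective ?_⟩
  ext i
  simpa using h i

/-- The coordinates `e` are such that `ℓ` is the line at infinity and the vertical direction does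
not belong to `B`. -/
def IsAffineFrame (B : Set (PGPoint F)) (ℓ : PGLine F)
    (e : (Fin 3 → F) ≃ₗ[F] (Fin 3 → F)) : Prop :=
  (∀ P, pgMem P ℓ ↔ e P.rep 2 = 0) ∧ ∀ P ∈ B, e P.rep 2 = 0 → e P.rep 1 ≠ 0

theorem exists_point_notMem [Fintype F] {B : Set (PGPoint F)} {ℓ : PGLine F}
    (hB : nsec B ℓ ≤ Fintype.card F) : ∃ M, pgMem M ℓ ∧ M ∉ B := by
  by_contra! hall
  let g : Projectivization F ℓ.val → PGPoint F :=
    Projectivization.map ℓ.val.subtype ℓ.val.injective_subtype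
  have hg : Function.Injective g := Projectivization.map_injective _ _
  have hmem : ∀ x, pgMem (g x) ℓ := by
    intro x
    induction x using Projectivization.ind with
    | h v hv =>
      simp only [g]
      rw [pgMem, Projectivization.map_mk, Projectivization.submodule_mk,
        Submodule.span_singleton_le_iff_mem]
      exact v.2
  have hle : (Set.range g).ncard ≤ nsec B ℓ := by
    refine Set.ncard_le_ncard ?_ (Set.toFinite _)
    rintro _ ⟨x, rfl⟩
    exact ⟨hall _ (hmem x), hmem x⟩
  rw [← Set.image_univ, Set.ncard_image_of_injective _ hg, Set.ncard_univ,
    Projectivization.card_of_finrank_two F _ ℓ.2, Nat.card_eq_fintype_card] at hle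
  omega

theorem exists_isAffineFrame [Fintype F] {B : Set (PGPoint F)} {ℓ : PGLine F}
    (hB : nsec B ℓ ≤ Fintype.card F) : ∃ e, IsAffineFrame B ℓ e := by
  obtain ⟨M, hMℓ, hMB⟩ := exists_point_notMem hB
  rw [pgMem_iff_rep_mem] at hMℓ
  have hspan : Submodule.span F {M.rep} < ℓ.val := by
    refine lt_of_le_of_ne ((Submodule.span_singleton_le_iff_mem _ _).mpr hMℓ) fun h => ?_
    have := finrank_span_singleton (K := F) M.rep_nonzero
    rw [h, ℓ.2] at this
    omega
  obtain ⟨v, hvℓ, hv⟩ := SetLike.exists_of_lt hspan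
  have htop : ℓ.val < ⊤ := by
    refine lt_of_le_of_ne le_top fun h => ?_
    have := ℓ.2
    rw [h, finrank_top, Module.finrank_fin_fun] at this
    omega
  obtain ⟨u, -, hu⟩ := SetLike.exists_of_lt htop
  have hli : LinearIndependent F ![M.rep, v, u] := by
    rw [Fintype.linearIndependent_iff]
    intro g hg
    simp only [Fin.sum_univ_three, Matrix.cons_val_zero, Matrix.cons_val_one,
      Matrix.cons_val] at hg
    have h2 : g 2 = 0 := by
      by_contra h2
      apply hu
      have : g 2 • u ∈ ℓ.val := by
        rw [← neg_eq_iff_add_eq_zero.mpr hg]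
        exact ℓ.val.neg_mem (ℓ.val.add_mem (ℓ.val.smul_mem _ hMℓ) (ℓ.val.smul_mem _ hvℓ))
      exact (ℓ.val.smul_mem_iff h2).mp this
    have h1 : g 1 = 0 := by
      by_contra h1
      apply hv
      rw [h2, zero_smul, add_zero] at hg
      have : g 1 • v ∈ Submodule.span F {M.rep} := by
        rw [← neg_eq_iff_add_eq_zero.mpr hg]
        exact Submodule.neg_mem _ (Submodule.smul_mem _ _ (Submodule.mem_span_singleton_self _))
      exact ((Submodule.span F {M.rep}).smul_mem_iff h1).mp this
    have h0 : g 0 = 0 := by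
      rw [h2, h1, zero_smul, zero_smul, add_zero, add_zero] at hg
      exact (smul_eq_zero.mp hg).resolve_right M.rep_nonzero
    intro i
    fin_cases i <;> assumption
  let b := basisOfLinearIndependentOfCardEqFinrank hli (by simp)
  have hb : ⇑b = ![M.rep, v, u] := coe_basisOfLinearIndependentOfCardEqFinrank hli (by simp)
  have hsum : ∀ x, b.equivFun x 0 • M.rep + b.equivFun x 1 • v + b.equivFun x 2 • u = x := by
    intro x
    have := b.sum_equivFun x
    rw [Fin.sum_univ_three, hb] at this
    exact this
  refine ⟨b.equivFun, fun P => ?_, fun P hP h2 h1 => hMB ?_⟩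
  · have hx := hsum P.rep
    have hℓ : b.equivFun P.rep 0 • M.rep + b.equivFun P.rep 1 • v ∈ ℓ.val :=
      ℓ.val.add_mem (ℓ.val.smul_mem _ hMℓ) (ℓ.val.smul_mem _ hvℓ)
    rw [pgMem_iff_rep_mem]
    constructor
    · intro hP
      by_contra h2
      rw [← hx, ℓ.val.add_mem_iff_right hℓ, ℓ.val.smul_mem_iff h2] at hP
      exact hu hP
    · intro h2
      rw [← hx, h2, zero_smul, add_zero]
      exact hℓ
  · have hx := hsum P.rep
    rw [h2, h1, zero_smul, zero_smul, add_zero, add_zero] at hx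
    have : P = M := by
      rw [← P.mk_rep, ← M.mk_rep, Projectivization.mk_eq_mk_iff']
      exact ⟨_, hx⟩
    rwa [← this]

/-- The affine abscissa of a point in the coordinates `e`. -/
noncomputable def abscissa (e : (Fin 3 → F) ≃ₗ[F] (Fin 3 → F)) (P : PGPoint F) : F :=
  e P.rep 1 / e P.rep 2

/-- The affine ordinate of a point in the coordinates `e`. -/
noncomputable def ordinate (e : (Fin 3 → F) ≃ₗ[F] (Fin 3 → F)) (P : PGPoint F) : F :=
  e P.rep 0 / e P.rep 2

/-- The point at infinity of the lines of slope `m`. -/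
def slopePoint (e : (Fin 3 → F) ≃ₗ[F] (Fin 3 → F)) (m : F) : PGPoint F :=
  Projectivization.mk F (e.symm ![m, 1, 0]) <| by
    rw [Ne, LinearEquiv.map_eq_zero_iff]
    exact fun h => one_ne_zero (congrFun h 1)

theorem slopePoint_coords (e : (Fin 3 → F) ≃ₗ[F] (Fin 3 → F)) (m : F) :
    e (slopePoint e m).rep 1 ≠ 0 ∧ e (slopePoint e m).rep 2 = 0 ∧
      e (slopePoint e m).rep 0 = m * e (slopePoint e m).rep 1 := by
  obtain ⟨k, hk⟩ := Projectivization.exists_smul_eq_mk_rep F (e.symm ![m, 1, 0]) <| by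
    rw [Ne, LinearEquiv.map_eq_zero_iff]
    exact fun h => one_ne_zero (congrFun h 1)
  change _ = (slopePoint e m).rep at hk
  rw [← hk, Units.smul_def, map_smul, LinearEquiv.apply_symm_apply]
  simp [mul_comm]

theorem eq_slopePoint {e : (Fin 3 → F) ≃ₗ[F] (Fin 3 → F)} {m : F} {P : PGPoint F}
    (h2 : e P.rep 2 = 0) (h0 : e P.rep 0 = m * e P.rep 1) : P = slopePoint e m := by
  obtain ⟨s1, s2, s0⟩ := slopePoint_coords e m
  refine eq_of_coords_eq_smul e (e P.rep 1 / e (slopePoint e m).rep 1) fun i => ?_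
  fin_cases i
  · simp only [Fin.zero_eta, s0, h0]
    field_simp
  · simp only [Fin.mk_one]
    field_simp
  · simp [s2, h2]

theorem slopePoint_injective (e : (Fin 3 → F) ≃ₗ[F] (Fin 3 → F)) :
    Function.Injective (slopePoint e) := by
  intro m m' h
  obtain ⟨s1, -, s0⟩ := slopePoint_coords e m
  obtain ⟨-, -, s0'⟩ := slopePoint_coords e m'
  rw [← h, s0] at s0'
  exact mul_right_cancel₀ s1 s0'

theorem covector_dotProduct (x y z : F) (v : Fin 3 → F) :
    ![x, y, z] ⬝ᵥ v = x * v 0 + y * v 1 + z * v 2 :=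
  Matrix.vec3_dotProduct _ _

/-- The line of slope `m` through the affine points with `abscissa * m - ordinate = c`. -/
theorem slope_covector_iff {e : (Fin 3 → F) ≃ₗ[F] (Fin 3 → F)} {P : PGPoint F}
    (hP : e P.rep 2 ≠ 0) (m c : F) :
    ![-1, m, -c] ⬝ᵥ e P.rep = 0 ↔ abscissa e P * m - ordinate e P = c := by
  rw [abscissa, ordinate, covector_dotProduct]
  constructor
  · intro h
    field_simp
    linear_combination h
  · intro h
    field_simp at h
    linear_combination h

theorem vertical_covector_iff {e : (Fin 3 → F) ≃ₗ[F] (Fin 3 → F)} {P : PGPoint F}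
    (hP : e P.rep 2 ≠ 0) (c : F) : ![0, 1, -c] ⬝ᵥ e P.rep = 0 ↔ abscissa e P = c := by
  rw [abscissa, div_eq_iff hP, covector_dotProduct]
  constructor <;> intro h <;> linear_combination h

theorem slope_covector_infinite_iff {e : (Fin 3 → F) ≃ₗ[F] (Fin 3 → F)} {P : PGPoint F}
    (hP : e P.rep 2 = 0) (m c : F) :
    ![-1, m, -c] ⬝ᵥ e P.rep = 0 ↔ P = slopePoint e m := by
  rw [covector_dotProduct, hP]
  constructor
  · exact fun h => eq_slopePoint hP (by linear_combination -h)
  · rintro rfl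
    rw [(slopePoint_coords e m).2.2]
    ring

theorem vertical_covector_infinite_iff {e : (Fin 3 → F) ≃ₗ[F] (Fin 3 → F)} {P : PGPoint F}
    (hP : e P.rep 2 = 0) (c : F) : ![0, 1, -c] ⬝ᵥ e P.rep = 0 ↔ e P.rep 1 = 0 := by
  rw [covector_dotProduct, hP]
  simp

theorem slope_covector_ne_zero (m c : F) : ![-1, m, -c] ≠ 0 := fun h =>
  one_ne_zero (neg_eq_zero.mp (congrFun h 0))

theorem vertical_covector_ne_zero (c : F) : ![0, 1, -c] ≠ 0 := fun h =>
  one_ne_zero (congrFun h 1)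

theorem pgMem_slope_iff {R : PGPoint F} (hR : e R.rep 2 ≠ 0) {m : F} {L : PGLine F}
    (hRL : pgMem R L) (hmL : pgMem (slopePoint e m) L) (P : PGPoint F) :
    pgMem P L ↔ ![-1, m, -(abscissa e R * m - ordinate e R)] ⬝ᵥ e P.rep = 0 := by
  have hne : R ≠ slopePoint e m := fun h => hR (h ▸ (slopePoint_coords e m).2.1)
  exact pgMem_iff_covector e (slope_covector_ne_zero _ _) hne hRL hmL
    ((slope_covector_iff hR _ _).mpr rfl)
    ((slope_covector_infinite_iff (slopePoint_coords e m).2.1 _ _).mpr rfl) P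

theorem exists_line_through_slope {R : PGPoint F} (hR : e R.rep 2 ≠ 0) (m : F) :
    ∃ L : PGLine F, pgMem R L ∧ pgMem (slopePoint e m) L := by
  obtain ⟨L, hL⟩ := exists_line_of_covector e
    (slope_covector_ne_zero m (abscissa e R * m - ordinate e R))
  exact ⟨L, (hL _).mpr ((slope_covector_iff hR _ _).mpr rfl),
    (hL _).mpr ((slope_covector_infinite_iff (slopePoint_coords e m).2.1 _ _).mpr rfl)⟩

end Coordinates

section RedeiType

variable {F : Type*} [Field F] [Fintype F] {B : Set (PGPoint F)} {ℓ : PGLine F}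
  {e : (Fin 3 → F) ≃ₗ[F] (Fin 3 → F)}

/-- The points of `B` off the line at infinity. -/
noncomputable def affinePart (B : Set (PGPoint F)) (e : (Fin 3 → F) ≃ₗ[F] (Fin 3 → F)) :
    Finset (PGPoint F) :=
  (Set.toFinite {P ∈ B | e P.rep 2 ≠ 0}).toFinset

/-- The slopes whose point at infinity belongs to `B`. -/
noncomputable def slopeSet (B : Set (PGPoint F)) (e : (Fin 3 → F) ≃ₗ[F] (Fin 3 → F)) : Finset F :=
  (Set.toFinite {m | slopePoint e m ∈ B}).toFinset

@[simp]
theorem mem_affinePart {P : PGPoint F} : P ∈ affinePart B e ↔ P ∈ B ∧ e P.rep 2 ≠ 0 := by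
  simp [affinePart]

@[simp]
theorem mem_slopeSet {m : F} : m ∈ slopeSet B e ↔ slopePoint e m ∈ B := by
  simp [slopeSet]

theorem card_affinePart (he : IsAffineFrame B ℓ e)
    (hB : nsec B ℓ + Fintype.card F = B.ncard) :
    (affinePart B e).card = Fintype.card F := by
  have hinf : {P ∈ B | pgMem P ℓ} = B \ {P ∈ B | e P.rep 2 ≠ 0} := by
    ext P
    simp only [Set.mem_ofPred_eq, Set.mem_sdiff, he.1]
    tauto
  have hle : {P ∈ B | e P.rep 2 ≠ 0}.ncard + nsec B ℓ = B.ncard := by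
    rw [nsec, hinf, add_comm]
    exact Set.ncard_sdiff_add_ncard_of_subset (Set.sep_subset _ _) (Set.toFinite _)
  rw [affinePart, ← Set.ncard_eq_toFinset_card]
  omega

theorem card_slopeSet (he : IsAffineFrame B ℓ e) : (slopeSet B e).card = nsec B ℓ := by
  have himg : {P ∈ B | pgMem P ℓ} = slopePoint e '' {m | slopePoint e m ∈ B} := by
    ext P
    simp only [Set.mem_ofPred_eq, Set.mem_image]
    constructor
    · rintro ⟨hP, hPℓ⟩
      rw [he.1] at hPℓ
      have h1 := he.2 P hP hPℓ
      have heq := eq_slopePoint (m := e P.rep 0 / e P.rep 1) hPℓ (by field_simp)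
      exact ⟨_, heq ▸ hP, heq.symm⟩
    · rintro ⟨m, hm, rfl⟩
      exact ⟨hm, (he.1 _).mpr (slopePoint_coords e m).2.1⟩
  rw [nsec, himg, Set.ncard_image_of_injective _ (slopePoint_injective e), slopeSet,
    ← Set.ncard_eq_toFinset_card]

theorem injOn_abscissa (he : IsAffineFrame B ℓ e) (hblock : isBlocking B)
    (hs : (affinePart B e).card = Fintype.card F) : Set.InjOn (abscissa e) (affinePart B e) := by
  refine Finset.injOn_of_surjOn_of_card_le (t := Finset.univ) _ (by simp [Set.MapsTo]) ?_
    (by simp [hs])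
  intro c _
  obtain ⟨L, hL⟩ := exists_line_of_covector e (vertical_covector_ne_zero c)
  obtain ⟨P, hP, hPL⟩ := hblock L
  rw [hL] at hPL
  have h2 : e P.rep 2 ≠ 0 := fun h2 =>
    he.2 P hP h2 ((vertical_covector_infinite_iff h2 c).mp hPL)
  exact ⟨P, mem_affinePart.mpr ⟨hP, h2⟩, (vertical_covector_iff h2 c).mp hPL⟩

theorem injOn_intercept (hblock : isBlocking B)
    (hs : (affinePart B e).card = Fintype.card F) {m : F} (hm : m ∉ slopeSet B e) :
    Set.InjOn (fun P => abscissa e P * m - ordinate e P) (affinePart B e) := by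
  refine Finset.injOn_of_surjOn_of_card_le (t := Finset.univ) _ (by simp [Set.MapsTo]) ?_
    (by simp [hs])
  intro c _
  obtain ⟨L, hL⟩ := exists_line_of_covector e (slope_covector_ne_zero m c)
  obtain ⟨P, hP, hPL⟩ := hblock L
  rw [hL] at hPL
  have h2 : e P.rep 2 ≠ 0 := fun h2 =>
    hm (mem_slopeSet.mpr ((slope_covector_infinite_iff h2 m c).mp hPL ▸ hP))
  exact ⟨P, mem_affinePart.mpr ⟨hP, h2⟩, (slope_covector_iff h2 m c).mp hPL⟩

open Classical in
theorem nsec_slope {R : PGPoint F} (hR : e R.rep 2 ≠ 0) {m : F} {L : PGLine F}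
    (hRL : pgMem R L) (hmL : pgMem (slopePoint e m) L) :
    nsec B L = (if slopePoint e m ∈ B then 1 else 0) + ((affinePart B e).filter fun P =>
      abscissa e P * m - ordinate e P = abscissa e R * m - ordinate e R).card := by
  have hs2 := (slopePoint_coords e m).2.1
  have hset : {P ∈ B | pgMem P L} = ↑((if slopePoint e m ∈ B then {slopePoint e m} else ∅) ∪
      (affinePart B e).filter fun P =>
        abscissa e P * m - ordinate e P = abscissa e R * m - ordinate e R) := by
    ext P
    simp only [Set.mem_ofPred_eq, pgMem_slope_iff hR hRL hmL, Finset.coe_union, Set.mem_union,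
      Finset.mem_coe, Finset.mem_filter, mem_affinePart]
    by_cases h2 : e P.rep 2 = 0
    · rw [slope_covector_infinite_iff h2]
      split_ifs with hm
      · simp only [Finset.mem_singleton, h2]
        constructor
        · tauto
        · rintro (rfl | h)
          · exact ⟨hm, rfl⟩
          · tauto
      · constructor
        · rintro ⟨hP, rfl⟩
          exact absurd hP hm
        · simp [h2]
    · rw [slope_covector_iff h2]
      have hne : P ≠ slopePoint e m := fun h => h2 (h ▸ hs2)
      split_ifs <;> simp [h2, hne]
  rw [nsec, hset, Set.ncard_coe_finset, Finset.card_union_of_disjoint]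
  · split_ifs <;> simp
  · split_ifs <;> simp [hs2]

/-- If no bisecant of `B` passes through `R`, each slope in `B` is determined by `R` and another
affine point of `B`. -/
theorem exists_ne_of_no_bisecant {R : PGPoint F} (hR : R ∈ affinePart B e)
    (hbi : ∀ L : PGLine F, pgMem R L → nsec B L ≠ 2) {m : F} (hm : m ∈ slopeSet B e) :
    ∃ P ∈ affinePart B e, P ≠ R ∧
      abscissa e P * m - ordinate e P = abscissa e R * m - ordinate e R := by
  classical
  have hR2 := (mem_affinePart.mp hR).2
  obtain ⟨L, hRL, hmL⟩ := exists_line_through_slope hR2 m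
  by_contra! hne
  apply hbi L hRL
  rw [nsec_slope hR2 hRL hmL, if_pos (mem_slopeSet.mp hm),
    show ((affinePart B e).filter fun P =>
      abscissa e P * m - ordinate e P = abscissa e R * m - ordinate e R) = {R} from ?_]
  · simp
  · ext P
    simp only [Finset.mem_filter, Finset.mem_singleton]
    constructor
    · rintro ⟨hP, h⟩
      by_contra hPR
      exact hne P hP hPR h
    · rintro rfl
      exact ⟨hR, rfl⟩

theorem nsec_vertical (he : IsAffineFrame B ℓ e)
    (ha : Set.InjOn (abscissa e) (affinePart B e)) {R M : PGPoint F} (hR : R ∈ affinePart B e)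
    (hM2 : e M.rep 2 = 0) (hM1 : e M.rep 1 = 0) {L : PGLine F} (hRL : pgMem R L)
    (hML : pgMem M L) : nsec B L = 1 := by
  obtain ⟨hRB, hR2⟩ := mem_affinePart.mp hR
  have hne : R ≠ M := fun h => hR2 (h ▸ hM2)
  have hL := pgMem_iff_covector e (vertical_covector_ne_zero (abscissa e R)) hne hRL hML
    ((vertical_covector_iff hR2 _).mpr rfl) ((vertical_covector_infinite_iff hM2 _).mpr hM1)
  rw [nsec, Set.ncard_eq_one]
  refine ⟨R, Set.eq_singleton_iff_unique_mem.mpr ⟨⟨hRB, hRL⟩, ?_⟩⟩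
  rintro P ⟨hP, hPL⟩
  rw [hL] at hPL
  by_cases h2 : e P.rep 2 = 0
  · exact absurd ((vertical_covector_infinite_iff h2 _).mp hPL) (he.2 P hP h2)
  · exact ha (mem_affinePart.mpr ⟨hP, h2⟩) hR ((vertical_covector_iff h2 _).mp hPL)

theorem isMinimalBlocking_of_determined (he : IsAffineFrame B ℓ e) (hblock : isBlocking B)
    (hs : (affinePart B e).card = Fintype.card F) {R : PGPoint F} (hR : R ∈ affinePart B e)
    (hdet : ∀ m ∈ slopeSet B e, ∃ P ∈ affinePart B e, P ≠ R ∧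
      abscissa e P * m - ordinate e P = abscissa e R * m - ordinate e R) :
    isMinimalBlocking B := by
  refine ⟨hblock, fun P hP hP' => ?_⟩
  by_cases h2 : e P.rep 2 = 0
  · have h1 := he.2 P hP h2
    have heq := eq_slopePoint (m := e P.rep 0 / e P.rep 1) h2 (by field_simp)
    set m := e P.rep 0 / e P.rep 1
    obtain ⟨Q, hQ, hQR, hint⟩ := hdet m (mem_slopeSet.mpr (heq ▸ hP))
    refine hQR (Finset.injOn_of_surjOn_of_card_le (t := Finset.univ)
      (fun P => abscissa e P * m - ordinate e P) (by simp [Set.MapsTo]) ?_ (by simp [hs])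
      hQ hR hint)
    intro c _
    obtain ⟨L, hL⟩ := exists_line_of_covector e (slope_covector_ne_zero m c)
    obtain ⟨S, ⟨hS, hSP⟩, hSL⟩ := hP' L
    rw [hL] at hSL
    have hS2 : e S.rep 2 ≠ 0 := fun hS2 =>
      hSP (((slope_covector_infinite_iff hS2 m c).mp hSL).trans heq.symm)
    exact ⟨S, mem_affinePart.mpr ⟨hS, hS2⟩, (slope_covector_iff hS2 m c).mp hSL⟩
  · obtain ⟨L, hL⟩ := exists_line_of_covector e (vertical_covector_ne_zero (abscissa e P))
    obtain ⟨S, ⟨hS, hSP⟩, hSL⟩ := hP' L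
    rw [hL] at hSL
    have hS2 : e S.rep 2 ≠ 0 := fun hS2 =>
      he.2 S hS hS2 ((vertical_covector_infinite_iff hS2 _).mp hSL)
    exact hSP (injOn_abscissa he hblock hs (mem_affinePart.mpr ⟨hS, hS2⟩)
      (mem_affinePart.mpr ⟨hP, h2⟩) ((vertical_covector_iff hS2 _).mp hSL))

end RedeiType

/-- Let `B` be a blocking set of Rédei type in `PG(2,q)`, `q = p^h`, with Rédei line `ℓ`.
(1) If there is a point in `B ∖ ℓ` not contained in any bisecant of `B`, then `B` is minimal
    and `|ℓ ∩ B| ≡ 1 (mod p)`.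
(2) If `R, R' ∈ B ∖ ℓ` are such that neither is contained in a bisecant of `B`, then for
    every `M ∈ ℓ` the lines `RM` and `R'M` meet `B` in the same number of points. -/
theorem stmt_1 {F : Type*} [Field F] [Fintype F] (p h q : ℕ) (hp : p.Prime) (hq : q = p ^ h)
    (hcard : Fintype.card F = q)
    (B : Set (PGPoint F)) (ℓ : PGLine F) (hB : isRedeiWithLine q B ℓ) :
    ((∃ R ∈ B, ¬ pgMem R ℓ ∧ ∀ L : PGLine F, pgMem R L → nsec B L ≠ 2) →
      isMinimalBlocking B ∧ nsec B ℓ ≡ 1 [MOD p]) ∧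
    (∀ R ∈ B, ∀ R' ∈ B, ¬ pgMem R ℓ → ¬ pgMem R' ℓ →
      (∀ L : PGLine F, pgMem R L → nsec B L ≠ 2) →
      (∀ L : PGLine F, pgMem R' L → nsec B L ≠ 2) →
      ∀ M : PGPoint F, pgMem M ℓ →
        ∀ L L' : PGLine F, pgMem R L → pgMem M L → pgMem R' L' → pgMem M L' →
          nsec B L = nsec B L') := by
  have hcardF : nsec B ℓ + Fintype.card F = B.ncard := by rw [hcard]; exact hB.2.2
  have hle : nsec B ℓ ≤ Fintype.card F := by
    have := hB.2.1
    omega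
  obtain ⟨e, he⟩ := exists_isAffineFrame hle
  have hs := card_affinePart he hcardF
  have ha := injOn_abscissa he hB.1 hs
  have haff : ∀ R ∈ B, ¬ pgMem R ℓ → R ∈ affinePart B e := fun R hR hRℓ =>
    mem_affinePart.mpr ⟨hR, mt (he.1 R).mpr hRℓ⟩
  classical
  refine ⟨?_, ?_⟩
  · rintro ⟨R, hRB, hRℓ, hbi⟩
    have hR := haff R hRB hRℓ
    have hdet := fun m (hm : m ∈ slopeSet B e) => exists_ne_of_no_bisecant hR hbi hm
    refine ⟨isMinimalBlocking_of_determined he hB.1 hs hR hdet, ?_⟩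
    have hone : ((nsec B ℓ : ℕ) : F) = ((1 : ℕ) : F) := by
      rw [← card_slopeSet he, Nat.cast_one]
      exact card_slopes_cast_eq_one hs ha hR hdet fun m hm => injOn_intercept hB.1 hs hm
    have : Fact p.Prime := ⟨hp⟩
    have : CharP F p := charP_of_card_eq_prime_pow (hcard.trans hq)
    exact (CharP.natCast_eq_natCast F p).mp hone
  · intro R hRB R' hRB' hRℓ hRℓ' hbi hbi' M hM L L' hRL hML hRL' hML'
    have hR := haff R hRB hRℓ
    have hR' := haff R' hRB' hRℓ'
    rw [he.1] at hM
    by_cases h1 : e M.rep 1 = 0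
    · rw [nsec_vertical he ha hR hM h1 hRL hML, nsec_vertical he ha hR' hM h1 hRL' hML']
    · have heq := eq_slopePoint (m := e M.rep 0 / e M.rep 1) hM (by field_simp)
      rw [heq] at hML hML'
      rw [nsec_slope (mem_affinePart.mp hR).2 hRL hML,
        nsec_slope (mem_affinePart.mp hR').2 hRL' hML',
        card_filter_slope_eq hs ha hR hR' (fun m hm => exists_ne_of_no_bisecant hR hbi hm)
          (fun m hm => exists_ne_of_no_bisecant hR' hbi' hm)
          fun m hm => injOn_intercept hB.1 hs hm]
end

section
/- Let f be a function from GF(q) to GF(q), let U = {(x, f(x)) : x ∈ GF(q)} be its graph, and let N be the number of directions determined by U. Let s = p^e be maximal such that every line whose direction is determined by U and which is incident with a point of U is incident with a multiple of s points of U. Then one of the following holds: (1) s = 1 and (q+3)/2 ≤ N ≤ q + 1; (2) q/s + 1 ≤ N ≤ (q − 1)/(s − 1); (3) s = q and N = 1. -/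
open Polynomial

theorem natDegree_derivative_add_one_le {F : Type*} [Field F] {g : F[X]}
    (hg : derivative g ≠ 0) : (derivative g).natDegree + 1 ≤ g.natDegree := by
  have : g.natDegree ≠ 0 := fun h => hg (derivative_of_natDegree_zero h)
  have := natDegree_derivative_lt this
  omega

theorem prod_X_sub_C_eq_X_pow_card_sub_X {F : Type*} [Field F] [Fintype F] :
    ∏ b : F, (X - C b) = X ^ Fintype.card F - X := by
  have hdeg := FiniteField.X_pow_card_sub_X_natDegree_eq F (Fintype.one_lt_card (α := F))
  have hmon : (X ^ Fintype.card F - X : F[X]).Monic :=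
    monic_X_pow_sub (by rw [degree_X]; exact_mod_cast Fintype.one_lt_card)
  have h := prod_multiset_X_sub_C_of_monic_of_roots_card_eq hmon (by
    rw [FiniteField.roots_X_pow_card_sub_X, hdeg]; rfl)
  rw [FiniteField.roots_X_pow_card_sub_X] at h
  exact h

theorem coeff_coeff_swap {R : Type*} [CommRing R] (P : R[X][X]) (j k : ℕ) :
    ((Bivariate.swap P).coeff j).coeff k = (P.coeff k).coeff j := by
  induction P using Polynomial.induction_on' with
  | add P Q hP hQ => simp only [map_add, coeff_add, hP, hQ]
  | monomial n u =>
    induction u using Polynomial.induction_on' with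
    | add u v hu hv => simp only [map_add, coeff_add, hu, hv]
    | monomial i r =>
      rw [Bivariate.swap_monomial_monomial]
      simp only [coeff_monomial]
      split_ifs <;> simp [coeff_monomial, *]

section Redei

variable {F : Type*} [Field F] [Fintype F]

/-- The coefficient of `X ^ k` in the Rédei polynomial `∏ (X + a * Y - f a)` of the graph of `f`,
as a polynomial in `Y`. -/
noncomputable def redeiCoeff (f : F → F) (k : ℕ) : F[X] :=
  (∏ a, (X + C (C a * X - C (f a))) : F[X][X]).coeff k

theorem redeiCoeff_eq_sum (f : F → F) {k : ℕ} (hk : k ≤ Fintype.card F) :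
    redeiCoeff f k = ∑ t ∈ Finset.powersetCard (Fintype.card F - k) Finset.univ,
      ∏ a ∈ t, (C a * X - C (f a)) := by
  rw [redeiCoeff, Finset.prod_X_add_C_coeff _ _ (by rwa [Finset.card_univ]), Finset.card_univ]

theorem eval_redeiCoeff (f : F → F) (k : ℕ) (y : F) :
    (redeiCoeff f k).eval y = (∏ a, (X - C (f a - y * a))).coeff k := by
  rw [redeiCoeff, ← coe_evalRingHom, ← coeff_map, Polynomial.map_prod]
  congr 1
  refine Finset.prod_congr rfl fun a _ => ?_
  rw [Polynomial.map_add, map_X, map_C, coe_evalRingHom, eval_sub, eval_mul, eval_C, eval_C,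
    eval_X, mul_comm, ← neg_sub (f a), C_neg, ← sub_eq_add_neg]

theorem taylor_redeiCoeff (f : F → F) (k : ℕ) (m : F) :
    taylor m (redeiCoeff f k) = redeiCoeff (fun a => f a - m * a) k := by
  have h (u : F[X]) : taylor m u = (taylorAlgHom m : F[X] →+* F[X]) u := rfl
  rw [redeiCoeff, redeiCoeff, h, ← coeff_map, Polynomial.map_prod]
  congr 1
  refine Finset.prod_congr rfl fun a _ => ?_
  rw [Polynomial.map_add, map_X, map_C, ← h, map_sub, taylor_mul, taylor_C, taylor_C, taylor_X,
    C_sub (a := f a), C_mul (a := m)]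
  congr 2
  ring

theorem redeiCoeff_of_card_lt (f : F → F) {k : ℕ} (hk : Fintype.card F < k) :
    redeiCoeff f k = 0 := by
  refine coeff_eq_zero_of_natDegree_lt (lt_of_le_of_lt (natDegree_prod_le _ _) ?_)
  simpa only [natDegree_X_add_C, Finset.sum_const, Finset.card_univ, smul_eq_mul, mul_one] using hk

theorem redeiCoeff_card (f : F → F) : redeiCoeff f (Fintype.card F) = 1 := by
  simp [redeiCoeff_eq_sum]

theorem natDegree_redeiCoeff_lt (f : F → F) {k : ℕ} (hk : 2 ≤ k) (hkq : k < Fintype.card F) :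
    (redeiCoeff f k).natDegree < Fintype.card F - k := by
  set q := Fintype.card F with hq
  have hlin (a : F) : (C a * X - C (f a)).natDegree ≤ 1 := by
    refine (natDegree_sub_le _ _).trans (max_le ?_ (by simp))
    exact (natDegree_C_mul_le _ _).trans natDegree_X_le
  have hdeg : (redeiCoeff f k).natDegree ≤ q - k := by
    rw [redeiCoeff_eq_sum f hkq.le]
    refine natDegree_sum_le_of_forall_le _ _ fun t ht => ?_
    rw [hq, ← (Finset.mem_powersetCard.mp ht).2]
    refine (natDegree_prod_le _ _).trans ((Finset.sum_le_sum fun a _ => hlin a).trans ?_)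
    simp
  have htop : (redeiCoeff f k).coeff (q - k) = 0 := by
    have h := Finset.prod_X_add_C_coeff (Finset.univ : Finset F) (fun a => a)
      (k := k) (by rw [Finset.card_univ]; exact hkq.le)
    have h' : ∏ a : F, (X + C a) = X ^ q - X := by
      rw [hq, ← prod_X_sub_C_eq_X_pow_card_sub_X]
      exact Fintype.prod_equiv (Equiv.neg F) _ _ fun a => by simp
    rw [h', Finset.card_univ, coeff_sub, coeff_X_pow, coeff_X, if_neg hkq.ne, if_neg (by omega),
      sub_zero] at h
    rw [redeiCoeff_eq_sum f hkq.le, finsetSum_coeff, h]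
    refine Finset.sum_congr rfl fun t ht => ?_
    have h1 := coeff_prod_of_natDegree_le t (fun a => C a * X - C (f a)) 1 fun a _ => hlin a
    rw [(Finset.mem_powersetCard.mp ht).2, mul_one] at h1
    rw [hq, h1]
    simp [coeff_C]
  refine lt_of_le_of_ne hdeg fun heq => ?_
  rw [← heq, coeff_natDegree, leadingCoeff_eq_zero] at htop
  rw [htop, natDegree_zero] at heq
  omega

theorem eval_redeiCoeff_of_injective (f : F → F) {k : ℕ} (hk : 2 ≤ k) (hkq : k < Fintype.card F)
    {y : F} (hy : Function.Injective fun a => f a - y * a) : (redeiCoeff f k).eval y = 0 := by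
  have hbij := Finite.injective_iff_bijective.mp hy
  rw [eval_redeiCoeff, hbij.prod_comp (fun b => X - C b), prod_X_sub_C_eq_X_pow_card_sub_X,
    coeff_sub, coeff_X_pow, coeff_X, if_neg hkq.ne, if_neg (by omega), sub_zero]

theorem redeiCoeff_eq_zero (f : F → F) (S : Finset F)
    (hS : ∀ y ∈ S, Function.Injective fun a => f a - y * a) {k : ℕ} (hk : 2 ≤ k)
    (hkq : k < Fintype.card F) (hkS : Fintype.card F ≤ S.card + k) : redeiCoeff f k = 0 := by
  refine eq_zero_of_natDegree_lt_card_of_eval_eq_zero' _ S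
    (fun y hy => eval_redeiCoeff_of_injective f hk hkq (hS y hy)) ?_
  have := natDegree_redeiCoeff_lt f hk hkq
  omega

/-- If `φ` takes few values and the Rédei coefficients of large index vanish, then the low order
coefficients of all the Rédei coefficients vanish. -/
theorem coeff_redeiCoeff_eq_zero [DecidableEq F] (φ : F → F) {N j : ℕ} (hj : j ≠ 0)
    (hdeg : ∀ k, N ≤ k → k < Fintype.card F → redeiCoeff φ k = 0) (hN : N ≠ 0)
    (hlt : j * (Finset.univ.image φ).card + N ≤ Fintype.card F) (k : ℕ) :
    (redeiCoeff φ k).coeff j = 0 := by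
  set Q : F[X][X] := Bivariate.swap (∏ a, (X + C (C a * X - C (φ a)))) with hQ
  have hQcoeff (k : ℕ) : (Q.coeff j).coeff k = (redeiCoeff φ k).coeff j := by
    rw [hQ, coeff_coeff_swap, redeiCoeff]
  set V : F[X] := ∏ b ∈ Finset.univ.image φ, (X - C b) with hV
  have hVdeg : V.natDegree = (Finset.univ.image φ).card := by
    rw [hV, natDegree_prod_of_monic _ _ fun b _ => monic_X_sub_C b]
    simp only [natDegree_X_sub_C, Finset.sum_const, smul_eq_mul, mul_one]
  choose W hW using fun a => Finset.dvd_prod_of_mem (fun b : F => X - C b)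
    (Finset.mem_image_of_mem φ (Finset.mem_univ a))
  have hcomp : Q.comp (C V * X) =
      C (∏ a, (X - C (φ a))) * ∏ a, (1 + C (C a * W a) * X) := by
    rw [hQ, map_prod, Polynomial.prod_comp, map_prod C (fun a => X - C (φ a)),
      ← Finset.prod_mul_distrib]
    refine Finset.prod_congr rfl fun a _ => ?_
    have h : V = (X - C (φ a)) * W a := hW a
    rw [C_sub, C_mul, map_add, map_sub, map_mul, Bivariate.swap_Y, Bivariate.swap_X,
      Bivariate.swap_C_C, Bivariate.swap_C_C]
    simp only [add_comp, sub_comp, mul_comp, C_comp, X_comp, h, C_mul, C_sub]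
    ring
  have hdvd : ∏ a, (X - C (φ a)) ∣ Q.coeff j * V ^ j := by
    rw [← comp_C_mul_X_coeff, hcomp, coeff_C_mul]
    exact dvd_mul_right _ _
  rw [← hQcoeff]
  suffices h : Q.coeff j = 0 by rw [h, coeff_zero]
  by_contra h0
  have hV0 : V ≠ 0 := Finset.prod_ne_zero_iff.mpr fun b _ => X_sub_C_ne_zero b
  have h1 := natDegree_le_of_dvd hdvd (mul_ne_zero h0 (pow_ne_zero _ hV0))
  rw [natDegree_mul h0 (pow_ne_zero _ hV0), natDegree_pow, hVdeg,
    natDegree_prod_of_monic _ _ fun a _ => monic_X_sub_C _] at h1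
  simp only [natDegree_X_sub_C, Finset.sum_const, Finset.card_univ, smul_eq_mul, mul_one] at h1
  have h2 : (Q.coeff j).natDegree ≤ N - 1 := by
    refine natDegree_le_iff_coeff_eq_zero.mpr fun k hk => ?_
    rw [hQcoeff]
    rcases lt_trichotomy k (Fintype.card F) with h | h | h
    · rw [hdeg k (by omega) h, coeff_zero]
    · rw [h, redeiCoeff_card, coeff_one, if_neg hj]
    · rw [redeiCoeff_of_card_lt φ h, coeff_zero]
  omega

end Redei

/-- A product of powers of linear factors, one exponent of which is nonzero in the field, has
nonzero derivative. -/
theorem derivative_prod_X_sub_C_pow_ne_zero {F : Type*} [Field F] [Fintype F] (k : F → ℕ) {b : F}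
    (hb : (k b : F) ≠ 0) : derivative (∏ a, (X - C a) ^ k a) ≠ 0 := by
  classical
  intro h
  rw [← Finset.mul_prod_erase _ _ (Finset.mem_univ b)] at h
  set u := ∏ a ∈ Finset.univ.erase b, (X - C a) ^ k a with hu
  have hu0 : u.eval b ≠ 0 := by
    rw [hu, eval_prod]
    refine Finset.prod_ne_zero_iff.mpr fun a ha => ?_
    rw [eval_pow, eval_sub, eval_X, eval_C]
    exact pow_ne_zero _ (sub_ne_zero.mpr (Finset.ne_of_mem_erase ha).symm)
  obtain ⟨j, hj⟩ : ∃ j, k b = j + 1 :=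
    Nat.exists_eq_succ_of_ne_zero fun h0 => hb (by rw [h0, Nat.cast_zero])
  rw [hj] at h hb
  rw [derivative_mul, derivative_X_sub_C_pow] at h
  have h1 : (X - C b) ^ j * (C ((j + 1 : ℕ) : F) * u + (X - C b) * derivative u) = 0 := by
    rw [← h, Nat.add_sub_cancel]; ring
  have h2 := (mul_eq_zero.mp h1).resolve_left (pow_ne_zero _ (X_sub_C_ne_zero b))
  have h3 := congrArg (eval b) h2
  rw [eval_add, eval_mul, eval_mul, eval_C, eval_sub, eval_X, eval_C, sub_self, zero_mul,
    add_zero, eval_zero] at h3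
  exact mul_ne_zero hb hu0 h3

/-- If `G = ∏ (X - a) ^ k a` and `E` vanishes at the roots of `G`, then `G ∣ E * G'`. -/
theorem prod_X_sub_C_pow_dvd_mul_derivative {F : Type*} [Field F] [Fintype F] (k : F → ℕ)
    (E : F[X]) (hE : ∀ b, k b ≠ 0 → E.eval b = 0) :
    ∏ a, (X - C a) ^ k a ∣ E * derivative (∏ a, (X - C a) ^ k a) := by
  refine Finset.prod_dvd_of_coprime (fun a _ b _ hab => ?_) fun b _ => ?_
  · exact (isCoprime_X_sub_C_of_isUnit_sub (sub_ne_zero.mpr hab).isUnit).pow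
  · by_cases hb : k b = 0
    · simp [hb]
    have h1 : (X - C b) ^ (k b - 1) ∣ derivative (∏ a, (X - C a) ^ k a) :=
      pow_sub_one_dvd_derivative_of_pow_dvd
        (Finset.dvd_prod_of_mem (fun a => (X - C a) ^ k a) (Finset.mem_univ b))
    have h2 : X - C b ∣ E := dvd_iff_isRoot.mpr (hE b hb)
    have h3 := mul_dvd_mul h2 h1
    rwa [← pow_succ', Nat.sub_add_cancel (Nat.one_le_iff_ne_zero.mpr hb)] at h3

/-- If all fibres of `φ` have size divisible by `s`, then `∏ (X - φ a)` is an `s`-th power. -/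
theorem prod_X_sub_C_eq_pow_of_dvd_card_fiber {F : Type*} [Field F] [Fintype F] [DecidableEq F]
    (φ : F → F) {s : ℕ} (hs : ∀ b, s ∣ (Finset.univ.filter fun a => φ a = b).card) :
    ∏ a, (X - C (φ a)) =
      (∏ b, (X - C b) ^ ((Finset.univ.filter fun a => φ a = b).card / s)) ^ s := by
  rw [← Finset.prod_pow, ← Finset.prod_fiberwise Finset.univ φ]
  refine Finset.prod_congr rfl fun b _ => ?_
  rw [← pow_mul, Nat.div_mul_cancel (hs b)]
  refine Finset.prod_eq_pow_card fun a ha => ?_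
  rw [(Finset.mem_filter.mp ha).2]

/-- Rédei's degree bound for the fully reducible polynomial `∏ (X - φ a)`, which is a `p ^ e`-th
power but not a `p ^ (e + 1)`-th power. -/
theorem exists_coeff_ne_zero_of_dvd_card_fiber {F : Type*} [Field F] [Fintype F] [DecidableEq F]
    {p e n : ℕ} [Fact p.Prime] [CharP F p] (hcard : Fintype.card F = p ^ e * n) (hpn : p ∣ n)
    (φ : F → F) (hφ : ¬ Function.Injective φ)
    (hs : ∀ b, p ^ e ∣ (Finset.univ.filter fun a => φ a = b).card)
    {b : F} (hb : ¬ p ^ (e + 1) ∣ (Finset.univ.filter fun a => φ a = b).card) :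
    ∃ w, 1 ≤ w ∧ p ^ e * w < Fintype.card F ∧ n + 1 ≤ p ^ e * w + w ∧
      (∏ a, (X - C (φ a))).coeff (p ^ e * w) ≠ 0 := by
  have hs0 : 0 < p ^ e := pow_pos (Fact.out (p := p.Prime)).pos e
  set k : F → ℕ := fun b => (Finset.univ.filter fun a => φ a = b).card / p ^ e with hk
  set G : F[X] := ∏ b, (X - C b) ^ k b with hG
  have hpow : ∏ a, (X - C (φ a)) = G ^ p ^ e := prod_X_sub_C_eq_pow_of_dvd_card_fiber φ hs
  have hmonic : G.Monic := monic_prod_of_monic _ _ fun b _ => (monic_X_sub_C b).pow _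
  have hGdeg : G.natDegree = n := by
    have h := congrArg natDegree hpow
    rw [natDegree_prod_of_monic _ _ fun a _ => monic_X_sub_C _, hmonic.natDegree_pow] at h
    simp only [natDegree_X_sub_C, Finset.sum_const, Finset.card_univ, smul_eq_mul, mul_one,
      hcard] at h
    exact (Nat.eq_of_mul_eq_mul_left hs0 h).symm
  have hkb : ((k b : ℕ) : F) ≠ 0 := by
    rw [Ne, CharP.cast_eq_zero_iff F p]
    intro h
    apply hb
    rw [← Nat.div_mul_cancel (hs b), pow_succ']
    exact mul_dvd_mul_right h _
  have hdG := derivative_prod_X_sub_C_pow_ne_zero k hkb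
  obtain ⟨g, hg⟩ : ∃ g, G = X ^ n + g := ⟨G - X ^ n, by ring⟩
  have hdg : derivative G = derivative g := by
    rw [hg, derivative_add, derivative_X_pow, (CharP.cast_eq_zero_iff F p n).mpr hpn]
    simp
  rw [← hG, hdg] at hdG
  have hw := natDegree_derivative_add_one_le hdG
  have hwn : g.natDegree < n := by
    have hg0 : g ≠ 0 := fun h => hdG (by rw [h, derivative_zero])
    have h : (G - X ^ n).degree < G.degree := by
      refine degree_sub_lt_left ?_ hmonic.ne_zero ?_
      · rw [degree_eq_natDegree hmonic.ne_zero, hGdeg, degree_X_pow]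
      · rw [hmonic.leadingCoeff, leadingCoeff_X_pow]
    rw [hg, add_sub_cancel_left, ← hg, degree_eq_natDegree hmonic.ne_zero, hGdeg,
      degree_eq_natDegree hg0] at h
    exact_mod_cast h
  have hR : ∏ a, (X - C (φ a)) = X ^ Fintype.card F + g ^ p ^ e := by
    rw [hpow, hg, add_pow_char_pow, ← pow_mul, mul_comm n, hcard]
  have hlt : p ^ e * g.natDegree < Fintype.card F := by
    rw [hcard]; exact Nat.mul_lt_mul_of_pos_left hwn hs0
  refine ⟨g.natDegree, by omega, hlt, ?_, ?_⟩
  · have hdvd := prod_X_sub_C_pow_dvd_mul_derivative k (g ^ p ^ e + X) fun c hc => by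
      have h : eval c (∏ a, (X - C (φ a))) = 0 := by
        rw [hpow, eval_pow, hG, eval_prod, Finset.prod_eq_zero (Finset.mem_univ c),
          zero_pow hs0.ne']
        rw [eval_pow, eval_sub, eval_X, eval_C, sub_self, zero_pow hc]
      rw [hR, eval_add, eval_pow, eval_X, FiniteField.pow_card] at h
      rw [eval_add, eval_X, add_comm, h]
    rw [← hG, hdg] at hdvd
    have hE : g ^ p ^ e + X ≠ 0 := by
      intro h
      have h' : g ^ p ^ e = -X := eq_neg_of_add_eq_zero_left h
      rw [h', ← sub_eq_add_neg] at hR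
      have hsep : (∏ a, (X - C (φ a))).Separable := by
        rw [hR]
        exact galois_poly_separable p _ (by rw [hcard]; exact hpn.mul_left _)
      exact hφ (separable_prod_X_sub_C_iff.mp hsep)
    have h1 := natDegree_le_of_dvd hdvd (mul_ne_zero hE hdG)
    have h2 : (g ^ p ^ e + X).natDegree ≤ p ^ e * g.natDegree := by
      refine natDegree_add_le_of_degree_le natDegree_pow_le ?_
      rw [natDegree_X]
      exact Nat.mul_pos hs0 (by omega)
    rw [hGdeg, natDegree_mul hE hdG] at h1
    omega
  · rw [hR, coeff_add, coeff_X_pow, if_neg hlt.ne, zero_add, coeff_pow_mul_natDegree]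
    refine pow_ne_zero _ (leadingCoeff_ne_zero.mpr fun h => hdG ?_)
    rw [h, derivative_zero]

/-- A Rédei coefficient of large index vanishes when few directions are determined and all lines
in these directions are incident with many points of the graph. -/
theorem redeiCoeff_eq_zero_of_mul_card_le {F : Type*} [Field F] [Fintype F] [DecidableEq F]
    (f : F → F) (D : Finset F) (hinj : ∀ y ∉ D, Function.Injective fun a => f a - y * a)
    {s : ℕ} (hs2 : 2 ≤ s) (hs : (s : F) = 0)
    (himage : ∀ m ∈ D, s * (Finset.univ.image fun a => f a - m * a).card ≤ Fintype.card F)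
    (hD2 : 2 ≤ D.card) (hD : s * D.card ≤ Fintype.card F) {k : ℕ} (hk2 : 2 ≤ k)
    (hkq : k < Fintype.card F) (hk : Fintype.card F + s ≤ (s + 1) * k) :
    redeiCoeff f k = 0 := by
  have hcompl : Dᶜ.card + D.card = Fintype.card F := by
    rw [Finset.card_compl]
    exact Nat.sub_add_cancel (Finset.card_le_univ D)
  have hzero (k : ℕ) (h1 : D.card ≤ k) (h2 : k < Fintype.card F) : redeiCoeff f k = 0 :=
    redeiCoeff_eq_zero f Dᶜ (fun y hy => hinj y (Finset.mem_compl.mp hy)) (by omega) h2 (by omega)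
  by_cases hkD : D.card ≤ k
  · exact hzero k hkD hkq
  have hdeg := natDegree_redeiCoeff_lt f hk2 hkq
  have hder : derivative (redeiCoeff f k) = 0 := by
    by_contra h0
    have hdvd : ∏ m ∈ D, (X - C m) ^ s ∣ derivative (redeiCoeff f k) := by
      refine Finset.prod_dvd_of_coprime (fun a _ b _ hab => ?_) fun m hm => ?_
      · exact (isCoprime_X_sub_C_of_isUnit_sub (sub_ne_zero.mpr hab).isUnit).pow
      have hcoeff (j : ℕ) (hj0 : j ≠ 0) (hj : j < s) : (taylor m (redeiCoeff f k)).coeff j = 0 := by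
        rw [taylor_redeiCoeff]
        refine coeff_redeiCoeff_eq_zero _ (N := D.card) hj0 (fun i h1 h2 => ?_) (by omega) ?_ k
        · rw [← taylor_redeiCoeff, hzero i h1 h2, map_zero]
        · have h1 := himage m hm
          generalize (Finset.univ.image fun a => f a - m * a).card = i at h1 ⊢
          refine le_of_mul_le_mul_left (a := s) ?_ (by omega)
          calc s * (j * i + D.card) = j * (s * i) + s * D.card := by ring
            _ ≤ j * Fintype.card F + Fintype.card F := by gcongr
            _ = (j + 1) * Fintype.card F := by ring
            _ ≤ s * Fintype.card F := Nat.mul_le_mul_right _ hj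
      have htaylor : X ^ s ∣ taylor m (derivative (redeiCoeff f k)) := by
        have h : taylor m (derivative (redeiCoeff f k)) =
            derivative (taylor m (redeiCoeff f k)) := by
          rw [taylor_apply, taylor_apply, derivative_comp]
          simp
        rw [h, X_pow_dvd_iff]
        intro i hi
        rw [coeff_derivative]
        rcases Nat.lt_or_ge (i + 1) s with h1 | h1
        · rw [hcoeff (i + 1) (by omega) h1, zero_mul]
        · have h2 : ((i : F) + 1) = 0 := by
            rw [← hs, show s = i + 1 by omega]
            push_cast
            rfl
          rw [h2, mul_zero]
      have h := map_dvd (taylorAlgHom (-m)) htaylor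
      simpa [taylor_taylor, ← sub_eq_add_neg] using h
    have h1 := natDegree_le_of_dvd hdvd h0
    rw [natDegree_prod_of_monic _ _ fun b _ => (monic_X_sub_C b).pow _] at h1
    simp only [natDegree_pow, natDegree_X_sub_C, mul_one, Finset.sum_const, smul_eq_mul] at h1
    have h2 := natDegree_derivative_add_one_le h0
    have h3 : (k + 1) * s ≤ D.card * s := Nat.mul_le_mul_right _ (by omega)
    have h4 : (k + 1) * s = s * k + s := by ring
    have h5 : (s + 1) * k = s * k + k := by ring
    omega
  by_contra h0
  have hdvd : ∏ y ∈ Dᶜ, (X - C y) ^ 2 ∣ redeiCoeff f k := by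
    refine Finset.prod_dvd_of_coprime (fun a _ b _ hab => ?_) fun y hy => ?_
    · exact (isCoprime_X_sub_C_of_isUnit_sub (sub_ne_zero.mpr hab).isUnit).pow
    rw [← le_rootMultiplicity_iff h0]
    refine (one_lt_rootMultiplicity_iff_isRoot h0).mpr ⟨?_, by rw [hder]; exact eval_zero⟩
    exact eval_redeiCoeff_of_injective f hk2 hkq (hinj y (Finset.mem_compl.mp hy))
  have h1 := natDegree_le_of_dvd hdvd h0
  rw [natDegree_prod_of_monic _ _ fun b _ => (monic_X_sub_C b).pow _] at h1
  simp only [natDegree_pow, natDegree_X_sub_C, mul_one, Finset.sum_const, smul_eq_mul] at h1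
  have h2 : 2 * D.card ≤ s * D.card := Nat.mul_le_mul_right _ hs2
  omega

/-- The number of directions of a graph all of whose lines in determined directions have at least
`s` points is at most `(q - 1) / (s - 1)`. -/
theorem card_mul_le_of_le_card_fiber {F : Type*} [Field F] [Fintype F] [DecidableEq F]
    (f : F → F) (D : Finset F) {s : ℕ}
    (hs : ∀ m ∈ D, s ≤ (Finset.univ.filter fun a => f a - m * a = f 0 - m * 0).card) :
    D.card * (s - 1) ≤ Fintype.card F - 1 := by
  set T : F → Finset F := fun m => (Finset.univ.filter fun a => f a - m * a = f 0 - m * 0).erase 0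
    with hT
  have hdisj : (D : Set F).PairwiseDisjoint T := by
    intro m _ m' _ hmm
    refine Finset.disjoint_left.mpr fun a ha ha' => hmm ?_
    simp only [hT, Finset.mem_erase, Finset.mem_filter, Finset.mem_univ, true_and, mul_zero,
      sub_zero] at ha ha'
    exact mul_right_cancel₀ ha.1 (by linear_combination ha'.2 - ha.2)
  have hsub : D.biUnion T ⊆ Finset.univ.erase 0 := by
    intro a ha
    obtain ⟨m, -, hm⟩ := Finset.mem_biUnion.mp ha
    exact Finset.mem_erase.mpr ⟨(Finset.mem_erase.mp hm).1, Finset.mem_univ a⟩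
  have h := Finset.card_le_card hsub
  rw [Finset.card_biUnion hdisj, Finset.card_erase_of_mem (Finset.mem_univ _),
    Finset.card_univ] at h
  refine le_trans ?_ h
  rw [← smul_eq_mul]
  refine Finset.card_nsmul_le_sum _ _ _ fun m hm => ?_
  rw [Finset.card_erase_of_mem (by simp)]
  exact Nat.sub_le_sub_right (hs m hm) 1

/-- Let `f : GF(q) → GF(q)`, `q = p^h`, let `U = {(x, f x)}` be its graph and `N` the number of
directions determined by `U` (the graph never determines the vertical direction `(∞)`, so the
determined directions form a subset `D ⊆ GF(q)`).  Let `s = p^e` be maximal such that every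
line whose direction is determined by `U` and which is incident with a point of `U` is incident
with a multiple of `s` points of `U`.  Then one of the following holds:
(1) `s = 1` and `(q+3)/2 ≤ N ≤ q + 1`;
(2) `q/s + 1 ≤ N ≤ (q − 1)/(s − 1)`;
(3) `s = q` and `N = 1`.

Here the line with direction `m ∈ GF(q)` through the point `(x, f x)` of the graph meets the
graph exactly in the points `(y, f y)` with `f y − f x = m·(y − x)`. -/
theorem stmt_5 {F : Type*} [Field F] [Fintype F] (p hh q : ℕ) (hp : p.Prime) (hq : q = p ^ hh)
    (hcard : Fintype.card F = q)
    (f : F → F)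
    (D : Set F) (hD : D = {m : F | ∃ x y : F, x ≠ y ∧ f x - f y = m * (x - y)})
    (N : ℕ) (hN : N = D.ncard)
    (s e : ℕ) (hs : s = p ^ e)
    (hdiv : ∀ m ∈ D, ∀ x : F, s ∣ {y : F | f y - f x = m * (y - x)}.ncard)
    (hmax : ∀ e' : ℕ, (∀ m ∈ D, ∀ x : F, p ^ e' ∣ {y : F | f y - f x = m * (y - x)}.ncard) →
      p ^ e' ≤ s) :
    (s = 1 ∧ ((q : ℚ) + 3) / 2 ≤ N ∧ N ≤ q + 1) ∨
    ((q : ℚ) / s + 1 ≤ N ∧ (N : ℚ) ≤ ((q : ℚ) - 1) / ((s : ℚ) - 1)) ∨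
    (s = q ∧ N = 1) := by
  classical
  have : Fact p.Prime := ⟨hp⟩
  have : CharP F p := charP_of_card_eq_prime_pow (f := hh) (by rw [hcard, hq])
  obtain ⟨D', hD'⟩ : ∃ D' : Finset F, D = D' := ⟨D.toFinset, by simp⟩
  have hND : N = D'.card := by rw [hN, hD', Set.ncard_coe_finset]
  have hline (m x : F) : {y : F | f y - f x = m * (y - x)}.ncard =
      (Finset.univ.filter fun a => f a - m * a = f x - m * x).card := by
    rw [← Set.ncard_coe_finset]
    congr 1
    ext y
    simp only [Set.mem_ofPred_eq, Finset.coe_filter, Finset.mem_univ, true_and]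
    constructor <;> intro h <;> linear_combination h
  simp only [hline] at hdiv hmax
  have hmem (m : F) : m ∈ D' ↔ ¬ Function.Injective fun a => f a - m * a := by
    rw [← Finset.mem_coe, ← hD', hD]
    simp only [Set.mem_ofPred_eq, Function.Injective]
    push Not
    constructor
    · rintro ⟨x, y, hxy, h⟩
      exact ⟨x, y, by linear_combination h, hxy⟩
    · rintro ⟨x, y, h, hxy⟩
      exact ⟨x, y, hxy, by linear_combination h⟩
  have hdiv' (m : F) (hm : m ∈ D') (b : F) :
      s ∣ (Finset.univ.filter fun a => f a - m * a = b).card := by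
    by_cases hb : ∃ x, f x - m * x = b
    · obtain ⟨x, rfl⟩ := hb
      exact hdiv m (by rw [hD']; exact hm) x
    · rw [Finset.filter_false_of_mem fun a _ h => hb ⟨a, h⟩]
      simp
  have hle (m : F) (hm : m ∈ D') (x : F) :
      s ≤ (Finset.univ.filter fun a => f a - m * a = f x - m * x).card :=
    Nat.le_of_dvd (Finset.card_pos.mpr ⟨x, by simp⟩) (hdiv' m hm _)
  have hupper : N * (s - 1) ≤ q - 1 := by
    rw [hND, ← hcard]
    exact card_mul_le_of_le_card_fiber f D' fun m hm => hle m hm 0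
  have hq2 : 2 ≤ q := by rw [← hcard]; exact Fintype.one_lt_card
  have hs1 : 1 ≤ s := by rw [hs]; exact Nat.one_le_pow _ _ hp.pos
  have hm0 : (f 1 - f 0) ∈ D' :=
    (hmem _).mpr fun hinj => one_ne_zero (hinj (a₁ := (1 : F)) (a₂ := 0) (by simp))
  have hN1 : 1 ≤ N := by rw [hND]; exact Finset.card_pos.mpr ⟨_, hm0⟩
  have hsq : s ≤ q := by
    refine (hle _ hm0 0).trans ?_
    rw [← hcard]
    exact Finset.card_le_univ _
  rcases hsq.eq_or_lt with hsq | hsq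
  · refine Or.inr (Or.inr ⟨hsq, le_antisymm ?_ hN1⟩)
    rw [hsq] at hupper
    exact Nat.le_of_mul_le_mul_right (by rwa [one_mul]) (by omega)
  have hN2 : 2 ≤ N := by
    by_contra hlt
    have hone : D'.card = 1 := by omega
    refine absurd (hmax hh fun m hm x => ?_) (by rw [← hq]; omega)
    rw [hD', Finset.mem_coe] at hm
    obtain ⟨m', hm'⟩ := Finset.card_eq_one.mp hone
    rw [Finset.filter_true_of_mem, Finset.card_univ, hcard, hq]
    intro a _
    by_cases hax : a = x
    · rw [hax]
    have h0 : a - x ≠ 0 := sub_ne_zero.mpr hax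
    have hslope : (f a - f x) / (a - x) ∈ D' := by
      refine (hmem _).mpr fun hinj => hax (hinj ?_)
      simp only
      field_simp
      ring
    rw [hm', Finset.mem_singleton] at hm hslope
    rw [hm, ← hslope]
    field_simp
    ring
  obtain ⟨m, hm, b, hb⟩ : ∃ m ∈ D', ∃ b,
      ¬ p ^ (e + 1) ∣ (Finset.univ.filter fun a => f a - m * a = b).card := by
    by_contra hcon
    push Not at hcon
    have := hmax (e + 1) fun m hm x => hcon m (by rwa [hD', Finset.mem_coe] at hm) _
    rw [hs] at this
    exact absurd this (not_le.mpr (Nat.pow_lt_pow_right hp.one_lt (Nat.lt_succ_self e)))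
  have hehh : e < hh := by
    rw [hs, hq] at hsq
    exact (Nat.pow_lt_pow_iff_right hp.one_lt).mp hsq
  obtain ⟨n, hpn, hqn⟩ : ∃ n, p ∣ n ∧ q = p ^ e * n :=
    ⟨p ^ (hh - e), dvd_pow_self p (by omega), by rw [hq, ← pow_add]; congr 1; omega⟩
  obtain ⟨w, hw1, hwq, hwn, hcoeff⟩ := exists_coeff_ne_zero_of_dvd_card_fiber
    (hcard.trans hqn) hpn _ ((hmem m).mp hm) (fun b => hs ▸ hdiv' m hm b) hb
  rw [← eval_redeiCoeff] at hcoeff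
  rw [← hs] at hwq hwn hcoeff hqn
  have hne : redeiCoeff f (s * w) ≠ 0 := fun h => hcoeff (by rw [h, eval_zero])
  have hinj (y : F) (hy : y ∉ D') : Function.Injective fun a => f a - y * a :=
    not_not.mp fun h => hy ((hmem y).mpr h)
  rcases hs1.eq_or_lt with hs1 | hs1
  · refine Or.inl ⟨hs1.symm, ?_, ?_⟩
    · have hwN : w < N := by
        by_contra hlt
        refine hne (redeiCoeff_eq_zero f D'ᶜ (fun y hy => hinj y (Finset.mem_compl.mp hy)) ?_ hwq ?_)
        · rw [← hs1]; omega
        · rw [Finset.card_compl, ← hs1]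
          omega
      rw [← hs1] at hwn hqn
      have : q + 3 ≤ N * 2 := by omega
      rw [div_le_iff₀ (by norm_num)]
      exact_mod_cast this
    · have := Finset.card_le_univ D'
      omega
  · refine Or.inr (Or.inl ⟨?_, ?_⟩)
    · have hlt : q < s * N := by
        by_contra hcon
        refine hne (redeiCoeff_eq_zero_of_mul_card_le f D' hinj hs1 ?_ (fun m hm => ?_)
          (hND ▸ hN2) (by rw [← hND, hcard]; omega) ?_ hwq ?_)
        · rw [CharP.cast_eq_zero_iff F p, hs]
          refine dvd_pow_self p fun h => ?_
          rw [hs, h, pow_zero] at hs1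
          omega
        · rw [mul_comm, ← smul_eq_mul, ← Finset.card_univ,
            Finset.card_eq_sum_card_image (fun a => f a - m * a) Finset.univ]
          refine Finset.card_nsmul_le_sum _ _ _ fun b hb => ?_
          obtain ⟨x, -, rfl⟩ := Finset.mem_image.mp hb
          exact hle m hm x
        · nlinarith
        · rw [hcard, hqn]
          nlinarith
      have hnN : n + 1 ≤ N := by
        rw [hqn] at hlt
        exact Nat.lt_of_mul_lt_mul_left hlt
      have hs0 : (s : ℚ) ≠ 0 := by positivity
      rw [hqn, Nat.cast_mul, mul_div_cancel_left₀ _ hs0]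
      exact_mod_cast hnN
    · have hs1' : (0 : ℚ) < (s : ℚ) - 1 := sub_pos.mpr (by exact_mod_cast hs1)
      rw [le_div_iff₀ hs1']
      have h : ((N * (s - 1) : ℕ) : ℚ) ≤ ((q - 1 : ℕ) : ℚ) := by exact_mod_cast hupper
      rwa [Nat.cast_mul, Nat.cast_sub hs1.le, Nat.cast_sub (by omega), Nat.cast_one] at h
end
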